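/- Identify M_{nm}(ℂ) with M_n(ℂ) ⊗ M_m(ℂ), let A = M_n(ℂ) ⊗ 1 and let u be a unitary in M_{nm}(ℂ), with B = uAu*. Write u = Σ_{i,j=1}^{n} e_{ij} ⊗ u_{ij} with blocks u_{ij} ∈ M_m(ℂ), and let ρ[U(A,B)] be the n²×n² matrix with ((i,j),(k,l)) entry (1/(nm))·Tr(u_{kl}* u_{ij}). Then A and B are mutually orthogonal if and only if S(ρ[U(A,B)]) = 2 log n = log(dim A). -/

import Mathlib

open Matrix

/-- The normalized trace `τ = Tr/(nm)` on `M_{nm}(ℂ) = M_n(ℂ) ⊗ M_m(ℂ)`, realized as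
`n×n` matrices with `m×m` matrix entries: `τ(x) = (1/(nm)) Σ_i Tr(x_{ii})`. -/
noncomputable def tauNM (n m : ℕ)
    (x : Matrix (Fin n) (Fin n) (Matrix (Fin m) (Fin m) ℂ)) : ℂ :=
  ((n * m : ℕ) : ℂ)⁻¹ * ∑ i, (x i i).trace

/-- The embedding `a ↦ a ⊗ 1` of `M_n(ℂ)` into `M_{nm}(ℂ) = M_n(ℂ) ⊗ M_m(ℂ)`,
whose image is the subalgebra `A = M_n(ℂ) ⊗ 1`. -/
noncomputable def inclA (n m : ℕ) (a : Matrix (Fin n) (Fin n) ℂ) :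
    Matrix (Fin n) (Fin n) (Matrix (Fin m) (Fin m) ℂ) :=
  a.map (algebraMap ℂ (Matrix (Fin m) (Fin m) ℂ))

/-- The `n²×n²` density matrix `ρ[U(A,B)]` associated to the operational partition
induced by the unitary `u` with `B = uAu*`:
its `((i,j),(k,l))` entry is `(1/(nm))·Tr(u_{kl}* u_{ij})`. -/
noncomputable def rhoAB (n m : ℕ)
    (u : Matrix (Fin n) (Fin n) (Matrix (Fin m) (Fin m) ℂ)) :
    Matrix (Fin n × Fin n) (Fin n × Fin n) ℂ :=
  Matrix.of fun p q : Fin n × Fin n =>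
    ((n * m : ℕ) : ℂ)⁻¹ * (star (u q.1 q.2) * u p.1 p.2).trace

/-- The von Neumann entropy `S(ρ) = Σ_i η(λ_i)` of a Hermitian matrix `ρ`, where
`λ_i` are the eigenvalues of `ρ` (with multiplicity) and `η(t) = -t log t`. -/
noncomputable def vnEntropy {k : Type*} [Fintype k] [DecidableEq k]
    (ρ : Matrix k k ℂ) (hρ : ρ.IsHermitian) : ℝ :=
  ∑ i, Real.negMulLog (hρ.eigenvalues i)

/-- The normalized trace of a product of an element of `A` and an element of `B`,
in terms of the entries of `ρ[U(A,B)]`. -/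
theorem tauNM_inclA_mul_conj {n m : ℕ}
    (u : Matrix (Fin n) (Fin n) (Matrix (Fin m) (Fin m) ℂ)) (a b : Matrix (Fin n) (Fin n) ℂ) :
    tauNM n m (inclA n m a * (u * inclA n m b * star u)) =
      ∑ i, ∑ j, ∑ l, ∑ k, a i j * b k l * rhoAB n m u (j, k) (i, l) := by
  simp only [tauNM, inclA, rhoAB, Matrix.mul_apply, Matrix.map_apply, Matrix.trace_sum,
    Finset.mul_sum, Finset.sum_mul, Matrix.of_apply, Algebra.algebraMap_eq_smul_one,
    Matrix.star_apply, smul_mul_assoc, mul_smul_comm, one_mul, mul_one, Matrix.trace_smul,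
    smul_eq_mul]
  refine Finset.sum_congr rfl fun i _ => Finset.sum_congr rfl fun j _ =>
    Finset.sum_congr rfl fun l _ => Finset.sum_congr rfl fun k _ => ?_
  rw [Matrix.trace_mul_comm (u j k)]
  ring

theorem tauNM_inclA {n m : ℕ} (hm : 0 < m) (a : Matrix (Fin n) (Fin n) ℂ) :
    tauNM n m (inclA n m a) = (n : ℂ)⁻¹ * a.trace := by
  have hm' : (m : ℂ) ≠ 0 := by exact_mod_cast hm.ne'
  simp only [tauNM, inclA, Matrix.map_apply, Algebra.algebraMap_eq_smul_one, Matrix.trace_smul,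
    Matrix.trace_one, Fintype.card_fin, smul_eq_mul, ← Finset.sum_mul, Nat.cast_mul, mul_inv]
  rw [Matrix.trace]
  simp only [Matrix.diag_apply]
  field_simp

/-- The partial trace of `ρ[U(A,B)]` over the first factor is the normalized identity. -/
theorem sum_rhoAB {n m : ℕ} (hm : 0 < m)
    (u : Matrix (Fin n) (Fin n) (Matrix (Fin m) (Fin m) ℂ)) (hu : star u * u = 1)
    (k l : Fin n) :
    ∑ i, rhoAB n m u (i, k) (i, l) = if l = k then (n : ℂ)⁻¹ else 0 := by
  have hm' : (m : ℂ) ≠ 0 := by exact_mod_cast hm.ne'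
  have h := congrArg Matrix.trace (congrFun (congrFun hu l) k)
  simp only [Matrix.mul_apply, Matrix.star_apply, Matrix.trace_sum, Matrix.one_apply] at h
  simp only [rhoAB, Matrix.of_apply, ← Finset.mul_sum]
  rw [h]
  split_ifs
  · simp only [Matrix.trace_one, Fintype.card_fin, Nat.cast_mul, mul_inv]
    field_simp
  · simp

theorem tauNM_conj_inclA {n m : ℕ} (hm : 0 < m)
    (u : Matrix (Fin n) (Fin n) (Matrix (Fin m) (Fin m) ℂ)) (hu : star u * u = 1)
    (b : Matrix (Fin n) (Fin n) ℂ) :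
    tauNM n m (u * inclA n m b * star u) = (n : ℂ)⁻¹ * b.trace := by
  have h1 : inclA n m 1 = 1 := Matrix.map_one _ (map_zero _) (map_one _)
  have h := tauNM_inclA_mul_conj u 1 b
  rw [h1, one_mul] at h
  rw [h]
  simp only [Matrix.one_apply, ite_mul, one_mul, zero_mul]
  simp only [Finset.sum_ite_irrel, Finset.sum_const_zero, Finset.sum_ite_eq, Finset.mem_univ,
    if_true]
  rw [Finset.sum_comm]
  simp_rw [Finset.sum_comm (s := (Finset.univ : Finset (Fin n))) (f := fun i k =>
    b k _ * rhoAB n m u (i, k) (i, _)), ← Finset.mul_sum, sum_rhoAB hm u hu]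
  simp [Matrix.trace, Finset.mul_sum, mul_comm]

/-- `A` and `uAu*` are mutually orthogonal exactly when `ρ[U(A,B)]` is maximally mixed. -/
theorem mutually_orthogonal_iff_rhoAB_eq {n m : ℕ} (hm : 0 < m)
    (u : Matrix (Fin n) (Fin n) (Matrix (Fin m) (Fin m) ℂ)) (hu : star u * u = 1) :
    (∀ a b : Matrix (Fin n) (Fin n) ℂ,
        tauNM n m (inclA n m a * (u * inclA n m b * star u)) =
          tauNM n m (inclA n m a) * tauNM n m (u * inclA n m b * star u)) ↔
      rhoAB n m u = ((n : ℂ)⁻¹ * (n : ℂ)⁻¹) • 1 := by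
  simp only [tauNM_inclA_mul_conj, tauNM_inclA hm, tauNM_conj_inclA hm u hu]
  constructor
  · intro h
    ext ⟨j, k⟩ ⟨i, l⟩
    have h' := h (Matrix.single i j 1) (Matrix.single k l 1)
    have hs : ∀ p q : Fin n, (Matrix.single p q (1 : ℂ)).trace = if p = q then 1 else 0 := by
      intro p q
      split_ifs with hpq
      · subst hpq; simp
      · exact Matrix.trace_single_eq_of_ne _ _ _ hpq
    have hl : ∑ i', ∑ j', ∑ l', ∑ k', Matrix.single i j (1 : ℂ) i' j' *
        Matrix.single k l (1 : ℂ) k' l' * rhoAB n m u (j', k') (i', l') =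
        rhoAB n m u (j, k) (i, l) := by
      simp only [Matrix.single_apply, ite_and, mul_ite, ite_mul, mul_one, mul_zero, zero_mul,
        one_mul, Finset.sum_ite_irrel, Finset.sum_const_zero, Finset.sum_ite_eq,
        Finset.mem_univ, if_true]
    rw [hl, hs, hs] at h'
    rw [h']
    by_cases hij : i = j <;> by_cases hkl : k = l <;>
      simp [hij, hkl, Ne.symm, eq_comm]
  · intro h a b
    rw [h]
    simp only [Matrix.smul_apply, Matrix.one_apply, Prod.mk.injEq, ite_and, smul_eq_mul, mul_ite,
      mul_one, mul_zero, Finset.sum_ite_irrel, Finset.sum_const_zero, Finset.sum_ite_eq',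
      Finset.mem_univ, if_true]
    simp only [Matrix.trace, Matrix.diag_apply, Finset.mul_sum, Finset.sum_mul]
    rw [Finset.sum_comm]
    refine Finset.sum_congr rfl fun i _ => Finset.sum_congr rfl fun j _ => ?_
    ring

open scoped ComplexOrder in
theorem posSemidef_rhoAB {n m : ℕ} (u : Matrix (Fin n) (Fin n) (Matrix (Fin m) (Fin m) ℂ)) :
    (rhoAB n m u).PosSemidef := by
  let V : Matrix (Fin n × Fin n) (Fin m × Fin m) ℂ := Matrix.of fun p q => u p.1 p.2 q.2 q.1
  have hV : rhoAB n m u = ((n * m : ℕ) : ℂ)⁻¹ • (V * Vᴴ) := by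
    ext p q
    simp only [rhoAB, Matrix.of_apply, Matrix.smul_apply, smul_eq_mul, Matrix.trace,
      Matrix.diag_apply, Matrix.mul_apply, Matrix.star_apply, Matrix.conjTranspose_apply, V,
      Fintype.sum_prod_type]
    congr 1
    exact Finset.sum_congr rfl fun i _ => Finset.sum_congr rfl fun j _ => mul_comm _ _
  rw [hV]
  refine (Matrix.posSemidef_self_mul_conjTranspose V).smul ?_
  rw [← Complex.ofReal_natCast, ← Complex.ofReal_inv, Complex.zero_le_real]
  positivity

theorem trace_rhoAB {n m : ℕ} (hn : 0 < n) (hm : 0 < m)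
    (u : Matrix (Fin n) (Fin n) (Matrix (Fin m) (Fin m) ℂ)) (hu : star u * u = 1) :
    (rhoAB n m u).trace = 1 := by
  have hn' : (n : ℂ) ≠ 0 := by exact_mod_cast hn.ne'
  simp only [Matrix.trace, Matrix.diag_apply, Fintype.sum_prod_type]
  rw [Finset.sum_comm]
  simp [sum_rhoAB hm u hu, hn']

/-- A probability vector has maximal Shannon entropy exactly when it is uniform. -/
theorem sum_negMulLog_eq_log_card_iff {ι : Type*} [Fintype ι] [Nonempty ι] {p : ι → ℝ}
    (hp : ∀ i, 0 ≤ p i) (hsum : ∑ i, p i = 1) :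
    ∑ i, Real.negMulLog (p i) = Real.log (Fintype.card ι) ↔
      ∀ i, p i = (Fintype.card ι : ℝ)⁻¹ := by
  have hN : (0 : ℝ) < Fintype.card ι := by exact_mod_cast Fintype.card_pos
  have h := Real.strictConcaveOn_negMulLog.map_sum_eq_iff (t := Finset.univ)
    (w := fun _ : ι => (Fintype.card ι : ℝ)⁻¹) (p := p) (fun _ _ => by positivity)
    (by simp [hN.ne']) (fun i _ => hp i)
  simp only [smul_eq_mul, ← Finset.mul_sum, hsum, mul_one, Finset.mem_univ, true_imp_iff] at h
  rw [← h, Real.negMulLog, Real.log_inv, neg_mul_neg, mul_right_inj' (inv_pos.2 hN).ne', eq_comm]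

theorem Matrix.IsHermitian.forall_eigenvalues_eq_iff {k : Type*} [Fintype k] [DecidableEq k]
    {ρ : Matrix k k ℂ} (hρ : ρ.IsHermitian) (c : ℝ) :
    (∀ i, hρ.eigenvalues i = c) ↔ ρ = (c : ℂ) • 1 := by
  constructor
  · intro h
    have hs := hρ.spectral_theorem
    have hd : Matrix.diagonal (RCLike.ofReal ∘ hρ.eigenvalues : k → ℂ) = (c : ℂ) • 1 := by
      rw [Matrix.smul_one_eq_diagonal]
      congr 1
      funext i
      simp [h i]
    rw [hd, map_smul, map_one] at hs
    exact hs
  · intro h i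
    have hv := hρ.mulVec_eigenvectorBasis i
    have hne : (hρ.eigenvectorBasis i).ofLp ≠ 0 := by
      simpa using hρ.eigenvectorBasis.orthonormal.ne_zero i
    generalize hρ.eigenvalues i = t at hv ⊢
    generalize (hρ.eigenvectorBasis i).ofLp = v at hv hne
    rw [h, Matrix.smul_mulVec, Matrix.one_mulVec, ← Complex.coe_smul] at hv
    exact_mod_cast (smul_left_injective ℂ hne hv).symm

/-- Identify `M_{nm}(ℂ)` with `M_n(ℂ) ⊗ M_m(ℂ)`, let `A = M_n(ℂ) ⊗ 1`,
let `u` be a unitary with blocks `u_{ij} ∈ M_m(ℂ)`, and `B = uAu*`. Then `A` and `B`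
are mutually orthogonal if and only if `S(ρ[U(A,B)]) = 2 log n = log(dim A)`. -/
theorem mutually_orthogonal_iff_entropy_eq_log_dim
    {n m : ℕ} (hn : 0 < n) (hm : 0 < m)
    (u : Matrix (Fin n) (Fin n) (Matrix (Fin m) (Fin m) ℂ))
    (hu : star u * u = 1) (hu' : u * star u = 1)
    (hherm : (rhoAB n m u).IsHermitian) :
    (∀ a b : Matrix (Fin n) (Fin n) ℂ,
        tauNM n m (inclA n m a * (u * inclA n m b * star u)) =
          tauNM n m (inclA n m a) * tauNM n m (u * inclA n m b * star u)) ↔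
      vnEntropy (rhoAB n m u) hherm = 2 * Real.log n := by
  have : Nonempty (Fin n) := ⟨⟨0, hn⟩⟩
  have hsum : ∑ i, hherm.eigenvalues i = 1 := by
    have h := hherm.trace_eq_sum_eigenvalues
    rw [trace_rhoAB hn hm u hu] at h
    rw [← Complex.ofReal_inj]
    simpa using h.symm
  have h := sum_negMulLog_eq_log_card_iff
    (fun i => (posSemidef_rhoAB u).eigenvalues_nonneg i) hsum
  have hcard : (Fintype.card (Fin n × Fin n) : ℝ) = n * n := by simp
  have hn' : (n : ℝ) ≠ 0 := by exact_mod_cast hn.ne'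
  rw [hcard, Real.log_mul hn' hn', ← two_mul, hherm.forall_eigenvalues_eq_iff] at h
  rw [mutually_orthogonal_iff_rhoAB_eq hm u hu, vnEntropy, h]
  simp
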